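/- (Upper-bound propagation step.) Let $1\le k\le n$ and $U=\{1,\dots,n\}$, and let each item $a\in U$ have a utility $u_a\in\mathbb R$ and a consideration probability $p_a\in(0,1]$. A ranking is a $k$-tuple $r=(r_1,\dots,r_k)$ of distinct items of $U$. For $C\subseteq U$ put $$\Pr\nolimits_{PL}(r\mid C)=\prod_{s=1}^k\frac{\exp(u_{r_s})}{\sum_{t\in C\setminus\{r_1,\dots,r_{s-1}\}}\exp(u_t)}\quad\text{if }\{r_1,\dots,r_k\}\subseteq C,\qquad \Pr\nolimits_{PL}(r\mid C)=0\ \text{otherwise};$$ put $w(C)=\prod_{a\in C}p_a\prod_{a\in U\setminus C}(1-p_a)$, and let $\Pr_C(C)=w(C)/\sum_{C'\subseteq U,\,|C'|\ge k}w(C')$ if $|C|\ge k$ and $\Pr_C(C)=0$ otherwise. The PL+C probability of a ranking is $\Pr_{PL+C}(r)=\sum_{C\subseteq U}\Pr_C(C)\,\Pr_{PL}(r\mid C)$, and that of a set $R$ of rankings is $\Pr_{PL+C}(R)=\sum_{r\in R}\Pr_{PL+C}(r)$. Let $R_{a\le\ell}$ be the set of rankings with item $a$ in one of the top $\ell$ positions.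 Let $i,j\in U$ with $u_i>u_j$, and let $1\le\ell\le k$ with $\ell<n$. (Thus only the degenerate case $\ell=k=n$, in which every ranking lists every item, is excluded.) Suppose that $$c=\frac{\Pr_{PL+C}(R_{i\le\ell})}{\Pr_{PL+C}(R_{j\le\ell})}\le 1,$$ and that $b_j\in(0,1]$ satisfies $p_j\le b_j$. Then $$p_i\le\frac{c\,b_j}{1-b_j+c\,b_j}.$$ -/

import Mathlib

noncomputable section

/-- Unnormalized weight of a consideration set `C`: the items of `C` are considered,
the items outside `C` are not, independently. -/
def considerWeight (n : ℕ) (p : Fin n → ℝ) (C : Finset (Fin n)) : ℝ :=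
  (∏ i ∈ C, p i) * ∏ j ∈ Cᶜ, (1 - p j)

/-- Normalizing constant `z_{k,p}`: total weight of the consideration sets of size at least `k`. -/
def zConst (n k : ℕ) (p : Fin n → ℝ) : ℝ :=
  ∑ C ∈ Finset.univ.filter (fun C : Finset (Fin n) => k ≤ C.card), considerWeight n p C

/-- Probability of the consideration set `C`, conditioned on `|C| ≥ k`. -/
def prC (n k : ℕ) (p : Fin n → ℝ) (C : Finset (Fin n)) : ℝ :=
  if k ≤ C.card then considerWeight n p C / zConst n k p else 0

/-- Plackett–Luce probability of the length-`k` ranking `r` given the consideration set `C`.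
A ranking is an injective map from positions (`0` is the top one) to items. -/
def prPL (n k : ℕ) (u : Fin n → ℝ) (r : Fin k ↪ Fin n) (C : Finset (Fin n)) : ℝ :=
  if ∀ t : Fin k, r t ∈ C then
    ∏ t : Fin k, Real.exp (u (r t)) /
      ∑ j ∈ C \ (Finset.Iio t).image r, Real.exp (u j)
  else 0

/-- Plackett–Luce-with-consideration (PL+C) probability of the ranking `r`. -/
def prPLC (n k : ℕ) (u p : Fin n → ℝ) (r : Fin k ↪ Fin n) : ℝ :=
  ∑ C : Finset (Fin n), prC n k p C * prPL n k u r C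

/-- PL+C probability of a set of rankings. -/
def prPLCset (n k : ℕ) (u p : Fin n → ℝ) (R : Finset (Fin k ↪ Fin n)) : ℝ :=
  ∑ r ∈ R, prPLC n k u p r

/-- `R_{i≤ℓ}`: the set of length-`k` rankings with item `i` in one of the top `ℓ` positions. -/
def topSet (n k : ℕ) (i : Fin n) (ℓ : ℕ) : Finset (Fin k ↪ Fin n) :=
  Finset.univ.filter (fun r => ∃ t : Fin k, (t : ℕ) < ℓ ∧ r t = i)

end

/-! Given that `C` is considered, let `P_a(C)` be the Plackett–Luce probability that `a` is among
the top `ℓ`. Conditioning on the first draw and inducting on `ℓ` shows that heavier items are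
likelier to be drawn early: `P_j(C) ≤ P_i(C)` when both items are in `C`, and
`P_j(S ∪ {j}) ≤ P_i(S ∪ {i})` when `S` contains neither. Averaging over the other considered items
and writing `x = p_i`, `y = p_j`, the two top-`ℓ` probabilities become, up to the common factor
`1 / z`,

  `M_i = x y A + x (1 - y) B` and `M_j = x y A' + (1 - x) y B'` with `A' ≤ A` and `B' ≤ B`.

If `c = M_i / M_j ≤ 1` and `B > 0`, this forces `x (1 - y) ≤ (1 - x) y`, and comparing the two sums
term by term then gives `x (1 - y) M_j ≤ (1 - x) y M_i`: the odds of `x` are at most `c` times those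
of `y`. The case `B = 0` arises only when `k = n`; then only the full set `C = U` admits a ranking,
and `M_j < M_i` contradicts `c ≤ 1`. -/

open Finset

section DrawProb

variable {α : Type*} [DecidableEq α] {k : ℕ} {v : α → ℝ}

/-- Plackett–Luce probability, for item weights `v`, of the sequence `r` of draws without
replacement from `C`. It is defined for every sequence, vanishing on those that leave `C` or repeat
an item, so that sums over sequences can be evaluated one draw at a time. -/
noncomputable def drawProb (v : α → ℝ) (r : Fin k → α) (C : Finset α) : ℝ :=
  ∏ t, if r t ∈ C \ (Iio t).image r then v (r t) / ∑ a ∈ C \ (Iio t).image r, v a else 0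

lemma injective_of_drawProb_ne_zero {r : Fin k → α} {C : Finset α} (h : drawProb v r C ≠ 0) :
    Function.Injective r := by
  refine Function.Injective.of_lt_imp_ne fun s t hst heq => h <|
    prod_eq_zero (mem_univ t) (if_neg ?_)
  simpa using fun _ => ⟨s, hst, heq⟩

lemma drawProb_cons (b : α) (r : Fin k → α) (C : Finset α) :
    drawProb v (Fin.cons b r : Fin (k + 1) → α) C =
      if b ∈ C then v b / (∑ a ∈ C, v a) * drawProb v r (C.erase b) else 0 := by
  have remaining_zero : C \ (Iio 0).image (Fin.cons b r : Fin (k + 1) → α) = C := by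
    ext; simp
  have remaining_succ (t : Fin k) :
      C \ (Iio t.succ).image (Fin.cons b r : Fin (k + 1) → α) = C.erase b \ (Iio t).image r := by
    ext a
    simp [Fin.exists_fin_succ, eq_comm (a := a), and_left_comm, and_assoc]
  simp only [drawProb, Fin.prod_univ_succ, Fin.cons_zero, Fin.cons_succ, remaining_zero,
    remaining_succ, ite_mul, zero_mul]

lemma sum_embedding_drawProb [Fintype α] (P : (Fin k → α) → Prop) [DecidablePred P]
    (C : Finset α) :
    ∑ r ∈ univ.filter (fun r : Fin k ↪ α => P r), drawProb v r C =
      ∑ r : Fin k → α with P r, drawProb v r C := by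
  refine sum_of_injOn (fun r : Fin k ↪ α => (r : Fin k → α)) DFunLike.coe_injective.injOn
    (fun r hr => by simpa using hr) (fun r hr hr' => ?_) fun _ _ => rfl
  by_contra h
  exact hr' ⟨⟨r, injective_of_drawProb_ne_zero h⟩, by simpa using hr, rfl⟩

lemma sum_drawProb_succ [Fintype α] (P : (Fin (k + 1) → α) → Prop) [DecidablePred P]
    (C : Finset α) :
    ∑ r with P r, drawProb v r C =
      ∑ b ∈ C, v b / (∑ a ∈ C, v a) *
        ∑ r : Fin k → α with P (Fin.cons b r), drawProb v r (C.erase b) := by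
  have consEquiv_eq (b : α) (r : Fin k → α) :
      Fin.consEquiv (fun _ => α) (b, r) = Fin.cons b r := rfl
  simp only [sum_filter]
  rw [← (Fin.consEquiv fun _ => α).sum_comp, Fintype.sum_prod_type,
    ← sum_subset (subset_univ C) fun b _ hb => ?_]
  · refine sum_congr rfl fun b hb => ?_
    simp only [consEquiv_eq, drawProb_cons, if_pos hb, mul_sum, mul_ite, mul_zero]
  · simp only [consEquiv_eq, drawProb_cons, if_neg hb, ite_self, sum_const_zero]

lemma sum_drawProb_eq_one [Fintype α] (hv : ∀ a, 0 < v a) {C : Finset α} (hk : k ≤ #C) :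
    ∑ r : Fin k → α, drawProb v r C = 1 := by
  induction k generalizing C with
  | zero => simp [drawProb]
  | succ k ih =>
    have hC : 0 < ∑ a ∈ C, v a := sum_pos (fun a _ => hv a) (card_pos.mp (by omega))
    have rest (b : α) (hb : b ∈ C) : ∑ r : Fin k → α, drawProb v r (C.erase b) = 1 :=
      ih (by rw [card_erase_of_mem hb]; omega)
    have first := sum_drawProb_succ (v := v) (fun _ : Fin (k + 1) → α => True) C
    simp only [filter_true] at first
    rw [first, sum_congr rfl fun b hb => by rw [rest b hb, mul_one], ← sum_div, div_self hC.ne']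

end DrawProb

section AvoidProb

variable {α : Type*} [DecidableEq α] {v : α → ℝ} {x y : ℝ} {i j : α}

/-- Probability that an item of weight `x`, competing with the items of `S` of weights `v`, is not
among the first `l` items drawn without replacement. The weight `x` is kept apart from `v` in order
to compare different items facing the same competitors. -/
noncomputable def avoidProb (v : α → ℝ) (x : ℝ) : ℕ → Finset α → ℝ
  | 0, _ => 1
  | l + 1, S => ∑ b ∈ S, v b / (x + ∑ a ∈ S, v a) * avoidProb v x l (S.erase b)

lemma sum_drawProb_avoid [Fintype α] (hv : ∀ a, 0 < v a) {k l : ℕ} (hlk : l ≤ k) {C : Finset α}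
    (hk : k ≤ #C) {a : α} (ha : a ∈ C) :
    ∑ r : Fin k → α with ∀ t : Fin k, (t : ℕ) < l → r t ≠ a, drawProb v r C =
      avoidProb v (v a) l (C.erase a) := by
  induction l generalizing k C with
  | zero => simpa [avoidProb] using sum_drawProb_eq_one hv hk
  | succ l ih =>
    obtain ⟨k, rfl⟩ := Nat.exists_eq_succ_of_ne_zero (by omega : k ≠ 0)
    rw [sum_drawProb_succ, avoidProb, add_sum_erase _ _ ha, ← add_sum_erase _ _ ha]
    have first_eq : (univ.filter fun r : Fin k → α => ∀ t : Fin (k + 1), (t : ℕ) < l + 1 →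
        (Fin.cons a r : Fin (k + 1) → α) t ≠ a) = ∅ :=
      filter_eq_empty_iff.mpr fun r _ h => h 0 (by simp) (by simp)
    rw [first_eq, sum_empty, mul_zero, zero_add]
    refine sum_congr rfl fun b hb => ?_
    obtain ⟨hba, hbC⟩ := mem_erase.mp hb
    rw [erase_right_comm, ← ih (k := k) (by omega) (by rw [card_erase_of_mem hbC]; omega)
      (mem_erase.mpr ⟨hba.symm, ha⟩)]
    simp [Fin.forall_fin_succ, hba]

lemma avoidProb_nonneg (hv : ∀ a, 0 ≤ v a) (hx : 0 ≤ x) (l : ℕ) (S : Finset α) :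
    0 ≤ avoidProb v x l S := by
  induction l generalizing S with
  | zero => simp [avoidProb]
  | succ l ih =>
    exact sum_nonneg fun b _ =>
      mul_nonneg (div_nonneg (hv b) (add_nonneg hx (sum_nonneg fun a _ => hv a))) (ih _)

lemma avoidProb_pos (hv : ∀ a, 0 < v a) (hx : 0 ≤ x) {l : ℕ} {S : Finset α} (hl : l ≤ #S) :
    0 < avoidProb v x l S := by
  induction l generalizing S with
  | zero => simp [avoidProb]
  | succ l ih =>
    have hS : S.Nonempty := card_pos.mp (by omega)
    have total_pos := add_pos_of_nonneg_of_pos hx (sum_pos (fun a _ => hv a) hS)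
    refine sum_pos (fun b hb => mul_pos (div_pos (hv b) total_pos) (ih ?_)) hS
    rw [card_erase_of_mem hb]
    omega

lemma avoidProb_le_one (hv : ∀ a, 0 ≤ v a) (hx : 0 ≤ x) (l : ℕ) (S : Finset α) :
    avoidProb v x l S ≤ 1 := by
  induction l generalizing S with
  | zero => simp [avoidProb]
  | succ l ih =>
    have hS : 0 ≤ ∑ a ∈ S, v a := sum_nonneg fun a _ => hv a
    calc avoidProb v x (l + 1) S ≤ ∑ b ∈ S, v b / (x + ∑ a ∈ S, v a) :=
          sum_le_sum fun b _ =>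
            mul_le_of_le_one_right (div_nonneg (hv b) (add_nonneg hx hS)) (ih _)
      _ = (∑ b ∈ S, v b) / (x + ∑ a ∈ S, v a) := (sum_div ..).symm
      _ ≤ 1 := div_le_one_of_le₀ (le_add_of_nonneg_left hx) (add_nonneg hx hS)

lemma avoidProb_lt_one (hv : ∀ a, 0 ≤ v a) (hx : 0 < x) {l : ℕ} (hl : 1 ≤ l) (S : Finset α) :
    avoidProb v x l S < 1 := by
  obtain ⟨l, rfl⟩ := Nat.exists_eq_succ_of_ne_zero (by omega : l ≠ 0)
  have hS : 0 ≤ ∑ a ∈ S, v a := sum_nonneg fun a _ => hv a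
  calc avoidProb v x (l + 1) S ≤ ∑ b ∈ S, v b / (x + ∑ a ∈ S, v a) :=
        sum_le_sum fun b _ => mul_le_of_le_one_right
          (div_nonneg (hv b) (add_nonneg hx.le hS)) (avoidProb_le_one hv hx.le l _)
    _ = (∑ b ∈ S, v b) / (x + ∑ a ∈ S, v a) := (sum_div ..).symm
    _ < 1 := (div_lt_one (add_pos_of_pos_of_nonneg hx hS)).mpr (lt_add_of_pos_left _ hx)

lemma avoidProb_anti (hv : ∀ a, 0 ≤ v a) (hx : 0 < x) (hxy : x ≤ y) (l : ℕ) (S : Finset α) :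
    avoidProb v y l S ≤ avoidProb v x l S := by
  induction l generalizing S with
  | zero => simp [avoidProb]
  | succ l ih =>
    have hS : 0 ≤ ∑ a ∈ S, v a := sum_nonneg fun a _ => hv a
    refine sum_le_sum fun b _ => mul_le_mul ?_ (ih _)
      (avoidProb_nonneg hv (hx.le.trans hxy) _ _) (div_nonneg (hv b) (add_nonneg hx.le hS))
    exact div_le_div_of_nonneg_left (hv b) (add_pos_of_pos_of_nonneg hx hS) (by gcongr)

lemma avoidProb_erase_succ {C : Finset α} (hi : i ∈ C) (hj : j ∈ C) (hij : i ≠ j) (l : ℕ) :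
    avoidProb v (v i) (l + 1) (C.erase i) =
      v j / (∑ a ∈ C, v a) * avoidProb v (v i) l ((C.erase i).erase j) +
      ∑ b ∈ (C.erase i).erase j, v b / (∑ a ∈ C, v a) *
        avoidProb v (v i) l ((C.erase b).erase i) := by
  rw [avoidProb, add_sum_erase _ _ hi, ← add_sum_erase _ _ (mem_erase.mpr ⟨hij.symm, hj⟩)]
  simp only [erase_right_comm (a := i)]

lemma avoidProb_erase_le (hv : ∀ a, 0 < v a) (hvij : v j ≤ v i) (l : ℕ) {C : Finset α}
    (hi : i ∈ C) (hj : j ∈ C) :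
    avoidProb v (v i) l (C.erase i) ≤ avoidProb v (v j) l (C.erase j) := by
  obtain rfl | hij := eq_or_ne i j
  · rfl
  induction l generalizing C with
  | zero => simp [avoidProb]
  | succ l ih =>
    have hC : 0 ≤ ∑ a ∈ C, v a := sum_nonneg fun a _ => (hv a).le
    rw [avoidProb_erase_succ hi hj hij, avoidProb_erase_succ hj hi hij.symm,
      erase_right_comm (a := j)]
    refine add_le_add (mul_le_mul (by gcongr) (avoidProb_anti (fun a => (hv a).le) (hv j) hvij _ _)
      (avoidProb_nonneg (fun a => (hv a).le) (hv i).le _ _) (div_nonneg (hv i).le hC))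
      (sum_le_sum fun b hb => mul_le_mul_of_nonneg_left ?_ (div_nonneg (hv b).le hC))
    simp only [mem_erase] at hb
    exact ih (mem_erase.mpr ⟨hb.2.1.symm, hi⟩) (mem_erase.mpr ⟨hb.1.symm, hj⟩)

lemma avoidProb_erase_lt (hv : ∀ a, 0 < v a) (hvij : v j < v i) {l : ℕ} (hl : 1 ≤ l)
    {C : Finset α} (hlC : l < #C) (hi : i ∈ C) (hj : j ∈ C) :
    avoidProb v (v i) l (C.erase i) < avoidProb v (v j) l (C.erase j) := by
  have hij : i ≠ j := by rintro rfl; exact hvij.false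
  obtain ⟨l, rfl⟩ := Nat.exists_eq_succ_of_ne_zero (by omega : l ≠ 0)
  have hC : 0 < ∑ a ∈ C, v a := sum_pos (fun a _ => hv a) ⟨i, hi⟩
  have card_rest : l ≤ #((C.erase i).erase j) := by
    rw [card_erase_of_mem (mem_erase.mpr ⟨hij.symm, hj⟩), card_erase_of_mem hi]
    omega
  rw [avoidProb_erase_succ hi hj hij, avoidProb_erase_succ hj hi hij.symm,
    erase_right_comm (a := j)]
  refine add_lt_add_of_lt_of_le (mul_lt_mul (by gcongr)
    (avoidProb_anti (fun a => (hv a).le) (hv j) hvij.le _ _) (avoidProb_pos hv (hv i).le card_rest)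
    (div_nonneg (hv i).le hC.le))
    (sum_le_sum fun b hb => mul_le_mul_of_nonneg_left ?_ (div_nonneg (hv b).le hC.le))
  simp only [mem_erase] at hb
  exact avoidProb_erase_le hv hvij.le l (mem_erase.mpr ⟨hb.2.1.symm, hi⟩)
    (mem_erase.mpr ⟨hb.1.symm, hj⟩)

end AvoidProb

section TopProb

variable {n k ℓ : ℕ} {u : Fin n → ℝ} {i j : Fin n} {C S : Finset (Fin n)}

/-- Plackett–Luce probability that `a` is in one of the top `ℓ` positions of a length-`k` ranking,
given the consideration set `C`. -/
noncomputable def topProb (k ℓ : ℕ) (u : Fin n → ℝ) (a : Fin n) (C : Finset (Fin n)) : ℝ :=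
  ∑ r ∈ topSet n k a ℓ, prPL n k u r C

lemma prPL_eq_drawProb (u : Fin n → ℝ) (r : Fin k ↪ Fin n) (C : Finset (Fin n)) :
    prPL n k u r C = drawProb (Real.exp ∘ u) r C := by
  have remaining_iff (t : Fin k) : r t ∈ C \ (Iio t).image r ↔ r t ∈ C := by
    simp +contextual
  simp only [prPL, drawProb, remaining_iff]
  split_ifs with h
  · simp [h]
  · obtain ⟨t, ht⟩ := not_forall.mp h
    exact (prod_eq_zero (mem_univ t) (if_neg ht)).symm

lemma prPL_of_card_lt (r : Fin k ↪ Fin n) (hC : #C < k) : prPL n k u r C = 0 := by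
  refine if_neg fun h => hC.not_ge ?_
  simpa using card_le_card_of_injOn r (s := univ) (fun t _ => h t) r.injective.injOn

lemma topProb_nonneg (a : Fin n) : 0 ≤ topProb k ℓ u a C := by
  refine sum_nonneg fun r _ => ?_
  unfold prPL
  split_ifs <;> positivity

lemma topProb_of_card_lt (a : Fin n) (hC : #C < k) : topProb k ℓ u a C = 0 :=
  sum_eq_zero fun r _ => prPL_of_card_lt r hC

lemma topProb_of_notMem {a : Fin n} (ha : a ∉ C) : topProb k ℓ u a C = 0 := by
  refine sum_eq_zero fun r hr => ?_
  obtain ⟨t, -, rfl⟩ := (mem_filter.mp hr).2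
  exact if_neg fun h => ha (h t)

lemma topProb_of_mem {a : Fin n} (ha : a ∈ C) (hℓk : ℓ ≤ k) (hk : k ≤ #C) :
    topProb k ℓ u a C = 1 - avoidProb (Real.exp ∘ u) (Real.exp (u a)) ℓ (C.erase a) := by
  have hv (b : Fin n) : 0 < (Real.exp ∘ u) b := Real.exp_pos _
  have total := sum_drawProb_eq_one hv hk
  have avoid := sum_drawProb_avoid hv hℓk hk ha
  rw [← sum_filter_add_sum_filter_not univ
    (fun r : Fin k → Fin n => ∃ t : Fin k, (t : ℕ) < ℓ ∧ r t = a)] at total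
  push Not at total
  rw [topProb, topSet, sum_congr rfl fun r _ => prPL_eq_drawProb u r C,
    sum_embedding_drawProb fun r : Fin k → Fin n => ∃ t : Fin k, (t : ℕ) < ℓ ∧ r t = a]
  exact eq_sub_of_add_eq (avoid ▸ total)

lemma topProb_pos {a : Fin n} (ha : a ∈ C) (hℓ : 1 ≤ ℓ) (hℓk : ℓ ≤ k) (hk : k ≤ #C) :
    0 < topProb k ℓ u a C := by
  rw [topProb_of_mem ha hℓk hk, sub_pos]
  exact avoidProb_lt_one (fun b => (Real.exp_pos _).le) (Real.exp_pos _) hℓ _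

lemma topProb_le_topProb (hu : u j ≤ u i) (hℓk : ℓ ≤ k) (hi : i ∈ C) (hj : j ∈ C) :
    topProb k ℓ u j C ≤ topProb k ℓ u i C := by
  obtain hk | hk := lt_or_ge #C k
  · rw [topProb_of_card_lt j hk, topProb_of_card_lt i hk]
  · rw [topProb_of_mem hi hℓk hk, topProb_of_mem hj hℓk hk]
    exact sub_le_sub_left (avoidProb_erase_le (v := Real.exp ∘ u) (fun a => Real.exp_pos _)
      (Real.exp_le_exp.mpr hu) ℓ hi hj) 1

lemma topProb_lt_topProb (hu : u j < u i) (hℓ : 1 ≤ ℓ) (hℓk : ℓ ≤ k) (hk : k ≤ #C) (hℓC : ℓ < #C)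
    (hi : i ∈ C) (hj : j ∈ C) : topProb k ℓ u j C < topProb k ℓ u i C := by
  rw [topProb_of_mem hi hℓk hk, topProb_of_mem hj hℓk hk]
  exact sub_lt_sub_left (avoidProb_erase_lt (v := Real.exp ∘ u) (fun a => Real.exp_pos _)
    (Real.exp_lt_exp.mpr hu) hℓ hℓC hi hj) 1

lemma topProb_insert_le_topProb_insert (hu : u j ≤ u i) (hℓk : ℓ ≤ k) (hi : i ∉ S) (hj : j ∉ S) :
    topProb k ℓ u j (insert j S) ≤ topProb k ℓ u i (insert i S) := by
  have card_i : #(insert i S) = #S + 1 := card_insert_of_notMem hi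
  have card_j : #(insert j S) = #S + 1 := card_insert_of_notMem hj
  obtain hk | hk := lt_or_ge (#S + 1) k
  · rw [topProb_of_card_lt j (card_j ▸ hk), topProb_of_card_lt i (card_i ▸ hk)]
  · rw [topProb_of_mem (mem_insert_self i S) hℓk (card_i ▸ hk),
      topProb_of_mem (mem_insert_self j S) hℓk (card_j ▸ hk), erase_insert hi, erase_insert hj]
    exact sub_le_sub_left (avoidProb_anti (fun a => (Real.exp_pos _).le) (Real.exp_pos _)
      (Real.exp_le_exp.mpr hu) ℓ S) 1

end TopProb

lemma prod_mul_prod_one_sub_nonneg {α : Type*} {p : α → ℝ} (hp0 : ∀ a, 0 ≤ p a)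
    (hp1 : ∀ a, p a ≤ 1) (S R : Finset α) : 0 ≤ (∏ a ∈ S, p a) * ∏ a ∈ R, (1 - p a) :=
  mul_nonneg (prod_nonneg fun a _ => hp0 a) (prod_nonneg fun a _ => sub_nonneg.mpr (hp1 a))

section SubsetExp

variable {α : Type*} [DecidableEq α] {p : α → ℝ} {T : Finset α} {f g : Finset α → ℝ}

/-- Expectation of `f S` for the random subset `S` of `T` that contains each `a ∈ T` independently
with probability `p a`. -/
noncomputable def subsetExp (p : α → ℝ) (T : Finset α) (f : Finset α → ℝ) : ℝ :=
  ∑ S ∈ T.powerset, ((∏ a ∈ S, p a) * ∏ a ∈ T \ S, (1 - p a)) * f S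

lemma subsetExp_insert {j : α} (hj : j ∉ T) (f : Finset α → ℝ) :
    subsetExp p (insert j T) f =
      p j * subsetExp p T (fun S => f (insert j S)) + (1 - p j) * subsetExp p T f := by
  simp only [subsetExp]
  rw [sum_powerset_insert hj, add_comm, mul_sum, mul_sum]
  congr 1 <;> refine sum_congr rfl fun S hS => ?_ <;>
    have hjS : j ∉ S := fun h => hj (mem_powerset.mp hS h)
  · rw [prod_insert hjS, insert_sdiff_insert, sdiff_insert_of_notMem hj]
    ring
  · rw [insert_sdiff_of_notMem _ hjS, prod_insert (by simp [hj])]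
    ring

lemma subsetExp_insert_insert {i j : α} (hij : i ≠ j) (hi : i ∉ T) (hj : j ∉ T)
    (hf : ∀ S, i ∉ S → f S = 0) :
    subsetExp p (insert i (insert j T)) f =
      p i * p j * subsetExp p T (fun S => f (insert i (insert j S))) +
      p i * (1 - p j) * subsetExp p T (fun S => f (insert i S)) := by
  have hiT : i ∉ insert j T := by simp [hij, hi]
  have without_i : subsetExp p (insert j T) f = 0 :=
    sum_eq_zero fun S hS => by rw [hf S fun h => hiT (mem_powerset.mp hS h), mul_zero]
  rw [subsetExp_insert hiT, without_i, subsetExp_insert hj]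
  ring

lemma subsetExp_mono (hp0 : ∀ a, 0 ≤ p a) (hp1 : ∀ a, p a ≤ 1) (hfg : ∀ S ⊆ T, f S ≤ g S) :
    subsetExp p T f ≤ subsetExp p T g :=
  sum_le_sum fun S hS => mul_le_mul_of_nonneg_left (hfg S (mem_powerset.mp hS))
    (prod_mul_prod_one_sub_nonneg hp0 hp1 S (T \ S))

lemma subsetExp_lt_subsetExp (hp0 : ∀ a, 0 < p a) (hp1 : ∀ a, p a ≤ 1)
    (hfg : ∀ S ⊆ T, f S ≤ g S) (hT : f T < g T) : subsetExp p T f < subsetExp p T g := by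
  refine sum_lt_sum (fun S hS => mul_le_mul_of_nonneg_left (hfg S (mem_powerset.mp hS))
    (prod_mul_prod_one_sub_nonneg (fun a => (hp0 a).le) hp1 S (T \ S))) ⟨T, mem_powerset_self T, ?_⟩
  have weight_pos : 0 < ∏ a ∈ T, p a := prod_pos fun a _ => hp0 a
  simpa using mul_lt_mul_of_pos_left hT weight_pos

lemma subsetExp_nonneg (hp0 : ∀ a, 0 ≤ p a) (hp1 : ∀ a, p a ≤ 1) (hf : ∀ S ⊆ T, 0 ≤ f S) :
    0 ≤ subsetExp p T f := by
  simpa [subsetExp] using subsetExp_mono hp0 hp1 (f := fun _ => 0) hf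

lemma subsetExp_pos (hp0 : ∀ a, 0 < p a) (hp1 : ∀ a, p a ≤ 1) (hf : ∀ S ⊆ T, 0 ≤ f S)
    (hT : 0 < f T) : 0 < subsetExp p T f := by
  simpa [subsetExp] using subsetExp_lt_subsetExp hp0 hp1 (f := fun _ => 0) hf hT

end SubsetExp

lemma odds_mul_le_odds_mul {x y A A' B B' : ℝ} (hx0 : 0 ≤ x) (hx1 : x ≤ 1) (hy0 : 0 ≤ y)
    (hy1 : y ≤ 1) (hA' : 0 ≤ A') (hA : A' ≤ A) (hB : B' ≤ B) (hB0 : 0 < B)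
    (h : x * y * A + x * (1 - y) * B ≤ y * x * A' + y * (1 - x) * B') :
    x * (1 - y) * (y * x * A' + y * (1 - x) * B') ≤
      y * (1 - x) * (x * y * A + x * (1 - y) * B) := by
  have : 0 ≤ 1 - x := sub_nonneg.mpr hx1
  have : 0 ≤ 1 - y := sub_nonneg.mpr hy1
  have both : x * y * A' ≤ x * y * A := by gcongr
  have one : y * (1 - x) * B' ≤ y * (1 - x) * B := by gcongr
  have hodds : x * (1 - y) ≤ y * (1 - x) := le_of_mul_le_mul_right (by linarith) hB0
  calc x * (1 - y) * (y * x * A' + y * (1 - x) * B')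
      = x * y * (x * (1 - y) * A') + x * (1 - y) * (y * (1 - x) * B') := by ring
    _ ≤ x * y * (y * (1 - x) * A) + x * (1 - y) * (y * (1 - x) * B) := by gcongr
    _ = y * (1 - x) * (x * y * A + x * (1 - y) * B) := by ring

lemma le_div_of_odds_le {x y b c : ℝ} (hx0 : 0 ≤ x) (hx1 : x ≤ 1) (hyb : y ≤ b) (hb0 : 0 < b)
    (hb1 : b ≤ 1) (hc : 0 < c) (h : x * (1 - y) ≤ c * (y * (1 - x))) :
    x ≤ c * b / (1 - b + c * b) := by
  have : 0 ≤ 1 - x := sub_nonneg.mpr hx1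
  have hodds : x * (1 - b) ≤ c * (b * (1 - x)) := by
    calc x * (1 - b) ≤ x * (1 - y) := by gcongr
      _ ≤ c * (y * (1 - x)) := h
      _ ≤ c * (b * (1 - x)) := by gcongr
  rw [le_div_iff₀ (add_pos_of_nonneg_of_pos (sub_nonneg.mpr hb1) (mul_pos hc hb0))]
  linarith

section TopMass

variable {n k ℓ : ℕ} {u p : Fin n → ℝ} {i j : Fin n}

/-- The PL+C probability that `a` is in one of the top `ℓ` positions, before division by the
normalizing constant `z_{k,p}`. Consideration sets with fewer than `k` items need not be excluded,
since they admit no ranking. -/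
noncomputable def topMass (k ℓ : ℕ) (u p : Fin n → ℝ) (a : Fin n) : ℝ :=
  subsetExp p univ (topProb k ℓ u a)

lemma prPLCset_topSet (a : Fin n) :
    prPLCset n k u p (topSet n k a ℓ) = topMass k ℓ u p a / zConst n k p := by
  simp only [prPLCset, prPLC, topMass, subsetExp, powerset_univ]
  rw [sum_comm, sum_div]
  refine sum_congr rfl fun C _ => ?_
  rw [← mul_sum, ← topProb, prC, considerWeight, compl_eq_univ_sdiff]
  split_ifs with hC
  · ring
  · rw [topProb_of_card_lt a (not_le.mp hC)]
    simp

lemma zConst_pos (hp : ∀ a, 0 < p a ∧ p a ≤ 1) (hkn : k ≤ n) : 0 < zConst n k p := by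
  refine sum_pos' (fun C _ => prod_mul_prod_one_sub_nonneg (fun a => (hp a).1.le)
    (fun a => (hp a).2) C Cᶜ) ⟨univ, by simpa using hkn, ?_⟩
  simpa [considerWeight] using prod_pos fun a _ => (hp a).1

lemma topMass_pos (hp : ∀ a, 0 < p a ∧ p a ≤ 1) (hℓ : 1 ≤ ℓ) (hℓk : ℓ ≤ k) (hkn : k ≤ n)
    (a : Fin n) : 0 < topMass k ℓ u p a :=
  subsetExp_pos (fun b => (hp b).1) (fun b => (hp b).2) (fun _ _ => topProb_nonneg a)
    (topProb_pos (mem_univ a) hℓ hℓk (by simpa using hkn))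

lemma topMass_lt_topMass_of_full_length (hp : ∀ a, 0 < p a ∧ p a ≤ 1) (hu : u j < u i)
    (hℓ : 1 ≤ ℓ) (hℓn : ℓ < n) : topMass n ℓ u p j < topMass n ℓ u p i := by
  refine subsetExp_lt_subsetExp (fun a => (hp a).1) (fun a => (hp a).2) (fun C _ => ?_)
    (topProb_lt_topProb hu hℓ hℓn.le (by simp) (by simpa using hℓn) (mem_univ i) (mem_univ j))
  obtain rfl | hC := eq_or_ne C univ
  · exact topProb_le_topProb hu.le hℓn.le (mem_univ i) (mem_univ j)
  · have card_lt : #C < n := (card_lt_card (ssubset_univ_iff.mpr hC)).trans_eq (card_fin n)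
    rw [topProb_of_card_lt j card_lt, topProb_of_card_lt i card_lt]

lemma topMass_eq {T : Finset (Fin n)} (hij : i ≠ j) (hi : i ∉ T) (hj : j ∉ T)
    (hT : insert i (insert j T) = univ) :
    topMass k ℓ u p i =
      p i * p j * subsetExp p T (fun S => topProb k ℓ u i (insert i (insert j S))) +
      p i * (1 - p j) * subsetExp p T (fun S => topProb k ℓ u i (insert i S)) := by
  rw [topMass, ← hT]
  exact subsetExp_insert_insert hij hi hj fun _ => topProb_of_notMem

lemma odds_mul_topMass_le (hp : ∀ a, 0 < p a ∧ p a ≤ 1) (hu : u j ≤ u i) (hℓ : 1 ≤ ℓ)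
    (hℓk : ℓ ≤ k) (hkn : k < n) (h : topMass k ℓ u p i ≤ topMass k ℓ u p j) :
    p i * (1 - p j) * topMass k ℓ u p j ≤ p j * (1 - p i) * topMass k ℓ u p i := by
  obtain rfl | hij := eq_or_ne i j
  · rfl
  have hp0 (a : Fin n) : 0 ≤ p a := (hp a).1.le
  have hp1 (a : Fin n) : p a ≤ 1 := (hp a).2
  let T : Finset (Fin n) := (univ.erase i).erase j
  have hiT : i ∉ T := by simp [T]
  have hjT : j ∉ T := by simp [T]
  have hT : insert i (insert j T) = univ := by
    rw [insert_erase (by simp [hij.symm]), insert_erase (mem_univ i)]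
  have hT' : insert j (insert i T) = univ := insert_comm j i T ▸ hT
  have card_insert_i_T : k ≤ #(insert i T) := by
    have hn := congrArg card hT'
    rw [card_insert_of_notMem (by simp [hij.symm, hjT]), card_fin] at hn
    omega
  rw [topMass_eq hij hiT hjT hT, topMass_eq hij.symm hjT hiT hT'] at h ⊢
  refine odds_mul_le_odds_mul (hp0 i) (hp1 i) (hp0 j) (hp1 j)
    (subsetExp_nonneg hp0 hp1 fun _ _ => topProb_nonneg j)
    (subsetExp_mono hp0 hp1 fun S _ => ?both)
    (subsetExp_mono hp0 hp1 fun S hS => ?one)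
    (subsetExp_pos (fun a => (hp a).1) hp1 (fun _ _ => topProb_nonneg i)
      (topProb_pos (mem_insert_self i T) hℓ hℓk card_insert_i_T)) h
  case both =>
    rw [insert_comm j i]
    exact topProb_le_topProb hu hℓk (by simp) (by simp)
  case one =>
    exact topProb_insert_le_topProb_insert hu hℓk (fun h => hiT (hS h)) fun h => hjT (hS h)

end TopMass

theorem upper_bound_propagation_general (n k ℓ : ℕ) (u p : Fin n → ℝ) (i j : Fin n)
    (hp : ∀ a, 0 < p a ∧ p a ≤ 1) (hu : u j ≤ u i)
    (hℓ : 1 ≤ ℓ) (hℓk : ℓ ≤ k) (hkn : k ≤ n) (hfull : k = n → ℓ < n ∧ u j < u i)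
    (c : ℝ)
    (hc : c = prPLCset n k u p (topSet n k i ℓ) / prPLCset n k u p (topSet n k j ℓ))
    (hc1 : c ≤ 1)
    (b : ℝ) (hb1 : b ≤ 1) (hbp : p j ≤ b) :
    p i ≤ c * b / (1 - b + c * b) := by
  have mass_i_pos := topMass_pos (u := u) hp hℓ hℓk hkn i
  have mass_j_pos := topMass_pos (u := u) hp hℓ hℓk hkn j
  rw [prPLCset_topSet, prPLCset_topSet, div_div_div_cancel_right₀ (zConst_pos hp hkn).ne'] at hc
  have mass_le : topMass k ℓ u p i ≤ topMass k ℓ u p j := (div_le_one mass_j_pos).mp (hc ▸ hc1)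
  obtain rfl | hkn := hkn.eq_or_lt
  · obtain ⟨hℓn, hu⟩ := hfull rfl
    exact absurd mass_le (topMass_lt_topMass_of_full_length hp hu hℓ hℓn).not_ge
  · refine le_div_of_odds_le (hp i).1.le (hp i).2 hbp ((hp j).1.trans_le hbp) hb1
      (hc ▸ div_pos mass_i_pos mass_j_pos) ?_
    rw [hc, div_mul_eq_mul_div, le_div_iff₀ mass_j_pos, mul_comm (topMass k ℓ u p i)]
    exact odds_mul_topMass_le hp hu hℓ hℓk hkn mass_le

/-- Upper-bound propagation step for the PL+C model. Given `ℓ ≤ k ≤ n`, the hypothesis `ℓ < n`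
excludes only `ℓ = k = n`, where every ranking lists every item. -/
theorem upper_bound_propagation (n k ℓ : ℕ) (u p : Fin n → ℝ) (i j : Fin n)
    (hp : ∀ a, 0 < p a ∧ p a ≤ 1) (hu : u i > u j)
    (hℓ : 1 ≤ ℓ) (hℓk : ℓ ≤ k) (hkn : k ≤ n) (hℓn : ℓ < n)
    (c : ℝ)
    (hc : c = prPLCset n k u p (topSet n k i ℓ) / prPLCset n k u p (topSet n k j ℓ))
    (hc1 : c ≤ 1)
    (b : ℝ) (hb0 : 0 < b) (hb1 : b ≤ 1) (hbp : p j ≤ b) :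
    p i ≤ c * b / (1 - b + c * b) :=
  upper_bound_propagation_general n k ℓ u p i j hp hu.le hℓ hℓk hkn (fun _ => ⟨hℓn, hu⟩)
    c hc hc1 b hb1 hbp
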